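/- Fix n ≥ 1 and a noninterlaced pair of k-element subsets A = {a_1,…,a_k} and B = {b_1,…,b_k} of {1,…,n}, listed so that a_1, a_2, …, a_k, b_k, b_{k−1}, …, b_1 occur in circular order. Then the noninterlaced minor det((M_{a_i,b_j})_{1≤i,j≤k}) can be expressed as a positive rational function of noninterlaced CONTIGUOUS minors: there exist multivariate real polynomials p and q, both with all coefficients nonnegative and q not identically zero, in variables indexed by the set T of triples (a,b,y) for which the contiguous minor CM_{a,b,y} has disjoint (hence noninterlaced) row set {a,…,a+y−1} and column set {b,…,b+y−1} modulo n, such that for every n×n real matrix M one has det((M_{a_i,b_j})_{i,j}) · q((CM_t(M))_{t∈T}) = p((CM_t(M))_{t∈T}). -/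

import Mathlib

/-- The contiguous minor `CM_{a,b,y}(M)` of an `n × n` matrix `M` (indexed by `ZMod n`,
i.e. indices are taken modulo `n`): the determinant of the `y × y` matrix whose rows are
`a, a+1, …, a+y-1` in order and whose columns are `b+y-1, …, b+1, b` in order. -/
noncomputable def contiguousMinor (n : ℕ) (M : Matrix (ZMod n) (ZMod n) ℝ)
    (a b : ℤ) (y : ℕ) : ℝ :=
  Matrix.det (Matrix.of fun i j : Fin y =>
    M (((a + (i : ℤ)) : ℤ) : ZMod n) (((b + (y : ℤ) - 1 - (j : ℤ)) : ℤ) : ZMod n))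

/-- The index set `T` of noninterlaced contiguous minors: triples `(a, b, y)` for which
the row set `{a, …, a+y-1}` and the column set `{b, …, b+y-1}`, taken modulo `n`,
are disjoint. -/
def ContigIdx (n : ℕ) : Set (ℤ × ℤ × ℕ) :=
  {s | ∀ i j : Fin s.2.2, ((s.1 + (i : ℤ) : ℤ) : ZMod n) ≠ ((s.2.1 + (j : ℤ) : ℤ) : ZMod n)}

/-! The three-term Plücker relation (the jaw move) writes a minor whose row set has a gap, times
a smaller minor, as a sum of products of minors that are smaller or have a shorter row span. Nothing
is subtracted, so filling gaps in the rows, and then in the columns, expresses every minor through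
the contiguous ones. The denominators do not vanish because they are handled as formal polynomials
with natural number coefficients, where sums and products of nonzero polynomials are nonzero. -/

open Matrix

section Plucker

variable {A : Type*} [CommRing A]

lemma sum_neg_one_pow_mul_det_smul_row_eq_zero {n : ℕ} (W : Matrix (Fin (n + 1)) (Fin n) A) :
    ∑ r : Fin (n + 1), ((-1) ^ (r : ℕ) * (W.submatrix r.succAbove id).det) • W r = 0 := by
  ext j
  -- Repeating column `j` in front of `W` gives a singular square matrix; expand it there.
  have hdet : (of fun r => (Fin.cons (W r j) (W r) : Fin (n + 1) → A)).det = 0 :=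
    det_zero_of_column_eq (Fin.succ_ne_zero j).symm fun r => by simp
  rw [det_succ_column_zero] at hdet
  simp only [Finset.sum_apply, Pi.smul_apply, smul_eq_mul, Pi.zero_apply]
  rw [← hdet]
  refine Finset.sum_congr rfl fun r _ => ?_
  rw [mul_right_comm]
  rfl

lemma det_of_insertNth {n : ℕ} (p : Fin (n + 1)) (x : Fin (n + 1) → A)
    (K : Fin n → Fin (n + 1) → A) :
    (of (p.insertNth x K : Fin (n + 1) → Fin (n + 1) → A)).det =
      (-1) ^ (p : ℕ) * (of (Fin.cons x K : Fin (n + 1) → Fin (n + 1) → A)).det := by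
  rw [← Fin.cons_comp_cycleRange]
  refine (det_permute p.cycleRange (of (Fin.cons x K : Fin (n + 1) → Fin (n + 1) → A))).trans ?_
  simp [Fin.sign_cycleRange]

lemma plucker_relation {n : ℕ} {ι : Type*} [Fintype ι]
    [DecidableEq ι] (W : Matrix (Fin (n + 1)) (Fin n) A) (N : Matrix ι ι A) (l : ι)
    (e : ι → Fin n) :
    ∑ r : Fin (n + 1), (-1) ^ (r : ℕ) * (W.submatrix r.succAbove id).det *
      (N.updateRow l (W r ∘ e)).det = 0 := by
  let φ : (Fin n → A) →ₗ[A] A := LinearMap.proj l ∘ₗ cramer Nᵀ ∘ₗ LinearMap.funLeft A A e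
  have φ_apply (x : Fin n → A) : φ x = (N.updateRow l (x ∘ e)).det := cramer_transpose_apply ..
  have h := congrArg φ (sum_neg_one_pow_mul_det_smul_row_eq_zero W)
  rw [map_sum, map_zero] at h
  simp only [map_smul, smul_eq_mul] at h
  simpa only [φ_apply] using h

/-- The rows that vary are the first, the last and row `σ + 1`; the smaller minors omit two of them
and the last column. -/
lemma plucker_three_term {m : ℕ} (W : Matrix (Fin (m + 3)) (Fin (m + 2)) A) (σ : Fin (m + 1)) :
    (W.submatrix (fun i : Fin (m + 1) => i.castSucc.succ) Fin.castSucc).det *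
        (W.submatrix σ.castSucc.succ.succAbove id).det =
      (W.submatrix (fun i => (σ.castSucc.succAbove i).succ) Fin.castSucc).det *
          (W.submatrix Fin.castSucc id).det +
        (W.submatrix (fun i => (σ.succ.succAbove i).castSucc) Fin.castSucc).det *
          (W.submatrix Fin.succ id).det := by
  set N := W.submatrix (fun i : Fin (m + 1) => i.castSucc.succ) Fin.castSucc with hN
  set K : Fin m → Fin (m + 1) → A := fun i => W (σ.succAbove i).castSucc.succ ∘ Fin.castSucc
  have hupdate (x : Fin (m + 1) → A) : N.updateRow σ x =
      of (σ.insertNth x K : Fin (m + 1) → Fin (m + 1) → A) := by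
    ext i j
    cases i using Fin.succAboveCases σ <;> simp [hN, K]
  have hfirst : W.submatrix (fun i => (σ.succ.succAbove i).castSucc) Fin.castSucc =
      of (Fin.cons (W 0 ∘ Fin.castSucc) K : Fin (m + 1) → Fin (m + 1) → A) := by
    ext i j
    cases i using Fin.cases <;> simp [K]
  have hlast : W.submatrix (fun i => (σ.castSucc.succAbove i).succ) Fin.castSucc =
      of ((Fin.last m).insertNth (W (Fin.last _) ∘ Fin.castSucc) K :
        Fin (m + 1) → Fin (m + 1) → A) := by
    ext i j
    cases i using Fin.lastCases <;> simp [K]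
  have hself : N.updateRow σ (W σ.castSucc.succ ∘ Fin.castSucc) = N := updateRow_eq_self N σ
  have hinner (i : Fin m) :
      (N.updateRow σ (W (σ.succAbove i).castSucc.succ ∘ Fin.castSucc)).det = 0 :=
    det_updateRow_eq_zero (M := N) (Fin.succAbove_ne σ i)
  have h := plucker_relation W N σ Fin.castSucc
  rw [Fin.sum_univ_succ, Fin.sum_univ_castSucc, Fin.sum_univ_succAbove _ σ, hself] at h
  simp only [hinner, mul_zero, Finset.sum_const_zero, add_zero] at h
  simp only [hupdate, det_of_insertNth, Fin.succ_last, Fin.succAbove_last, Fin.succAbove_zero,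
    Fin.val_zero, Fin.val_succ, Fin.val_castSucc, Fin.val_last, pow_succ, pow_zero] at h
  rw [hfirst, hlast, det_of_insertNth, Fin.val_last]
  refine (isUnit_one.neg.pow (σ : ℕ)).mul_left_cancel ?_
  linear_combination -h

end Plucker

/-- `x` is a subtraction-free rational function of the family `v`: it satisfies `x * q(v) = p(v)`
for nonzero polynomials `p` and `q` with natural number coefficients. The quotient is written as a
product because `A` is any commutative ring; that `p ≠ 0` is what allows `x` as a denominator. -/
def IsPositiveRational {S A : Type*} [CommRing A] (v : S → A) (x : A) : Prop :=
  ∃ p q : MvPolynomial S ℕ, p ≠ 0 ∧ q ≠ 0 ∧ x * MvPolynomial.aeval v q = MvPolynomial.aeval v p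

namespace IsPositiveRational

variable {S A : Type*} [CommRing A] {v : S → A} {x y z : A}

lemma apply (v : S → A) (s : S) : IsPositiveRational v (v s) :=
  ⟨MvPolynomial.X s, 1, MvPolynomial.X_ne_zero s, one_ne_zero, by simp⟩

lemma add (hx : IsPositiveRational v x) (hy : IsPositiveRational v y) :
    IsPositiveRational v (x + y) := by
  obtain ⟨p, q, hp, hq, h⟩ := hx
  obtain ⟨p', q', -, hq', h'⟩ := hy
  refine ⟨p * q' + p' * q, q * q', ?_, mul_ne_zero hq hq', ?_⟩
  · intro h0
    refine mul_ne_zero hp hq' (MvPolynomial.ext _ _ fun m => ?_)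
    exact (Nat.add_eq_zero_iff.1 (congrArg (MvPolynomial.coeff m) h0)).1
  · simp only [map_add, map_mul, ← h, ← h']
    ring

lemma mul (hx : IsPositiveRational v x) (hy : IsPositiveRational v y) :
    IsPositiveRational v (x * y) := by
  obtain ⟨p, q, hp, hq, h⟩ := hx
  obtain ⟨p', q', hp', hq', h'⟩ := hy
  refine ⟨p * p', q * q', mul_ne_zero hp hp', mul_ne_zero hq hq', ?_⟩
  simp only [map_mul, ← h, ← h']
  ring

lemma of_mul_eq (hy : IsPositiveRational v y) (hz : IsPositiveRational v z) (h : y * x = z) :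
    IsPositiveRational v x := by
  obtain ⟨p, q, hp, hq, hy⟩ := hy
  obtain ⟨p', q', hp', hq', hz⟩ := hz
  refine ⟨p' * q, p * q', mul_ne_zero hp' hq, mul_ne_zero hp hq', ?_⟩
  simp only [map_mul, ← hy, ← hz, ← h]
  ring

end IsPositiveRational

section Gaps

lemma exists_gap_or_consecutive {k : ℕ} {I : Fin (k + 1) → ℤ} (hI : StrictMono I) :
    (∃ σ : Fin k, I σ.castSucc + 1 < I σ.succ) ∨ ∀ i, I i = I 0 + i := by
  refine or_iff_not_imp_left.2 fun hgap i => ?_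
  push Not at hgap
  induction i using Fin.induction with
  | zero => simp
  | succ i ih =>
    have hstep : I i.castSucc < I i.succ := hI Fin.castSucc_lt_succ
    have hgap_i := hgap i
    rw [Fin.val_castSucc] at ih
    rw [Fin.val_succ]
    omega

lemma exists_strictMono_fill_gap {k : ℕ} {s : Set ℤ} (hs : s.OrdConnected)
    {I : Fin (k + 1) → ℤ} (hI : StrictMono I) (hIs : ∀ i, I i ∈ s) {σ : Fin k}
    (hσ : I σ.castSucc + 1 < I σ.succ) :
    ∃ w : Fin (k + 2) → ℤ, StrictMono w ∧ (∀ i, w i ∈ s) ∧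
      w ∘ σ.castSucc.succ.succAbove = I := by
  refine ⟨σ.castSucc.succ.insertNth (I σ.castSucc + 1) I,
    Fin.strictMono_insertNth hI σ _ (lt_add_one _) hσ, ?_, by ext; simp⟩
  rw [Fin.forall_iff_succAbove σ.castSucc.succ]
  constructor
  · simpa using hs.out (hIs σ.castSucc) (hIs σ.succ) ⟨(lt_add_one _).le, hσ.le⟩
  · simpa using hIs

variable {S A : Type*} [CommRing A] {v : S → A} {s t : Set ℤ}

lemma isPositiveRational_det_of_consecutive_rows_of_init {k : ℕ} {X : Matrix ℤ (Fin (k + 1)) A}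
    (hs : s.OrdConnected)
    (hinit : ∀ I : Fin k → ℤ, StrictMono I → (∀ i, I i ∈ s) →
      IsPositiveRational v (X.submatrix I Fin.castSucc).det)
    (hcons : ∀ a : ℤ, (∀ i : Fin (k + 1), a + i ∈ s) →
      IsPositiveRational v (X.submatrix (fun i : Fin (k + 1) => a + i) id).det)
    (I : Fin (k + 1) → ℤ) (hI : StrictMono I) (hIs : ∀ i, I i ∈ s) :
    IsPositiveRational v (X.submatrix I id).det := by
  induction hN : (I (Fin.last k) - I 0).toNat using Nat.strong_induction_on generalizing I with
  | _ N ih =>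
  obtain ⟨σ, hσ⟩ | hconsec := exists_gap_or_consecutive hI
  · obtain _ | m := k
    · exact σ.elim0
    obtain ⟨w, w_mono, w_mem, w_comp⟩ := exists_strictMono_fill_gap hs hI hIs hσ
    have w_first : w 0 = I 0 := by simp [← w_comp]
    have w_last : w (Fin.last _) = I (Fin.last _) := by simp [← w_comp]
    have I_first_lt_last : I 0 < I (Fin.last _) := hI Fin.last_pos
    have w_penultimate_lt : w (Fin.last _).castSucc < w (Fin.last _) :=
      w_mono (Fin.castSucc_lt_last _)
    have w_first_lt : w 0 < w (Fin.succ 0) := w_mono (Fin.succ_pos 0)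
    have drop_last : IsPositiveRational v (X.submatrix (w ∘ Fin.castSucc) id).det := by
      refine ih _ ?_ _ (w_mono.comp Fin.strictMono_castSucc) (fun i => w_mem _) rfl
      change (w (Fin.last _).castSucc - w 0).toNat < N
      omega
    have drop_first : IsPositiveRational v (X.submatrix (w ∘ Fin.succ) id).det := by
      refine ih _ ?_ _ (w_mono.comp Fin.strictMono_succ) (fun i => w_mem _) rfl
      change (w (Fin.last _) - w (Fin.succ 0)).toNat < N
      omega
    have smaller {f : Fin (m + 1) → Fin (m + 3)} (hf : StrictMono f) :
        IsPositiveRational v (X.submatrix (w ∘ f) Fin.castSucc).det :=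
      hinit _ (w_mono.comp hf) fun i => w_mem _
    rw [← w_comp]
    exact .of_mul_eq (smaller (Fin.strictMono_succ.comp Fin.strictMono_castSucc))
      (.add
        (.mul (smaller (Fin.strictMono_succ.comp (Fin.strictMono_succAbove _))) drop_last)
        (.mul (smaller (Fin.strictMono_castSucc.comp (Fin.strictMono_succAbove _))) drop_first))
      (plucker_three_term (X.submatrix w id) σ)
  · rw [funext hconsec]
    exact hcons _ fun i => hconsec i ▸ hIs i

lemma isPositiveRational_det_of_consecutive_rows {k : ℕ} {X : Matrix ℤ (Fin k) A}
    (hs : s.OrdConnected)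
    (hX : ∀ (l : ℕ) (hl : l ≤ k) (a : ℤ), (∀ i : Fin l, a + i ∈ s) →
      IsPositiveRational v (X.submatrix (fun i : Fin l => a + i) (Fin.castLE hl)).det)
    (I : Fin k → ℤ) (hI : StrictMono I) (hIs : ∀ i, I i ∈ s) :
    IsPositiveRational v (X.submatrix I id).det := by
  induction k with
  | zero => simpa using hX 0 le_rfl 0 (fun i => i.elim0)
  | succ k ih =>
    refine isPositiveRational_det_of_consecutive_rows_of_init hs ?_ (hX (k + 1) le_rfl) I hI hIs
    exact ih (X := X.submatrix id Fin.castSucc) fun l hl => hX l (hl.trans k.le_succ)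

lemma isPositiveRational_det_of_solid_minors {X : Matrix ℤ ℤ A}
    (hs : s.OrdConnected) (ht : t.OrdConnected)
    (hX : ∀ (k : ℕ) (a c : ℤ), (∀ i : Fin k, a + i ∈ s) → (∀ j : Fin k, c + j ∈ t) →
      IsPositiveRational v (X.submatrix (fun i : Fin k => a + i) (fun j : Fin k => c + j)).det)
    {k : ℕ} {I J : Fin k → ℤ} (hI : StrictMono I) (hJ : StrictMono J)
    (hIs : ∀ i, I i ∈ s) (hJt : ∀ j, J j ∈ t) :
    IsPositiveRational v (X.submatrix I J).det := by
  have consecutive_columns {l : ℕ} {I : Fin l → ℤ} (hI : StrictMono I) (hIs : ∀ i, I i ∈ s)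
      (c : ℤ) (hc : ∀ j : Fin l, c + j ∈ t) :
      IsPositiveRational v (X.submatrix I (fun j : Fin l => c + j)).det :=
    isPositiveRational_det_of_consecutive_rows (X := X.submatrix id fun j : Fin l => c + j) hs
      (fun k hk a ha => hX k a c ha fun j => hc (Fin.castLE hk j)) I hI hIs
  rw [← det_transpose]
  refine isPositiveRational_det_of_consecutive_rows (X := Xᵀ.submatrix id I) ht
    (fun l hl c hc => ?_) J hJ hJt
  rw [← det_transpose]
  exact consecutive_columns (hI.comp (Fin.strictMono_castLE hl)) (fun i => hIs _) c hc

end Gaps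

/-- The contiguous minor `CM_{a,b,y}(M)` for `s = (a, b, y)` in `T`, over any commutative ring. -/
def contigIdxMinor {n : ℕ} {R : Type*} [CommRing R] (M : Matrix (ZMod n) (ZMod n) R)
    (s : ContigIdx n) : R :=
  (of fun i j : Fin s.1.2.2 =>
    M ((s.1.1 + i : ℤ) : ZMod n) ((s.1.2.1 + s.1.2.2 - 1 - j : ℤ) : ZMod n)).det

lemma map_contigIdxMinor {n : ℕ} {R R' : Type*} [CommRing R] [CommRing R'] (f : R →+* R')
    (M : Matrix (ZMod n) (ZMod n) R) (s : ContigIdx n) :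
    f (contigIdxMinor M s) = contigIdxMinor (M.map f) s :=
  f.map_det _

lemma mem_contigIdx_of_window {n y : ℕ} {a b : ℤ}
    (h : ∀ i j : Fin y, a + i < b + j ∧ b + j < a + i + n) : (a, b, y) ∈ ContigIdx n := by
  intro i j hij
  rw [ZMod.intCast_eq_intCast_iff_dvd_sub] at hij
  obtain ⟨hlt, hltn⟩ := h i j
  have := Int.le_of_dvd (sub_pos.2 hlt) hij
  omega

lemma isPositiveRational_det_of_window {n k : ℕ} {R : Type*} [CommRing R]
    (M : Matrix (ZMod n) (ZMod n) R) {α β : Fin k → ℤ} (hα : StrictMono α) (hβ : StrictAnti β)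
    (hαβ : ∀ i j, α i < β j) (hβα : ∀ i j, β j < α i + n) :
    IsPositiveRational (contigIdxMinor M) (of fun i j => M (α i) (β j)).det := by
  -- Negating the column indices makes both rows and columns increasing.
  let X : Matrix ℤ ℤ R := of fun r c => M r ((-c : ℤ) : ZMod n)
  let hull (γ : Fin k → ℤ) : Set ℤ := upperClosure (Set.range γ) ∩ lowerClosure (Set.range γ)
  have ordConnected_hull (γ : Fin k → ℤ) : (hull γ).OrdConnected :=
    (upperClosure _).upper.ordConnected.inter (lowerClosure _).lower.ordConnected
  have mem_hull (γ : Fin k → ℤ) (i : Fin k) : γ i ∈ hull γ :=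
    ⟨subset_upperClosure ⟨i, rfl⟩, subset_lowerClosure ⟨i, rfl⟩⟩
  have window {r c : ℤ} (hr : r ∈ hull α) (hc : c ∈ hull (-β)) : r < -c ∧ -c < r + n := by
    obtain ⟨⟨_, ⟨i, rfl⟩, hir⟩, ⟨_, ⟨i', rfl⟩, hri'⟩⟩ := hr
    obtain ⟨⟨_, ⟨j, rfl⟩, hjc⟩, ⟨_, ⟨j', rfl⟩, hcj'⟩⟩ := hc
    rw [Pi.neg_apply] at hjc hcj'
    have := hαβ i' j'
    have := hβα i j
    omega
  have hX : (of fun i j => M (α i) (β j)) = X.submatrix α (-β) := by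
    ext i j
    simp [X]
  rw [hX]
  refine isPositiveRational_det_of_solid_minors (ordConnected_hull α) (ordConnected_hull (-β))
    (fun y a c ha hc => ?_) hα hβ.neg (mem_hull α) (mem_hull (-β))
  have mem : (a, 1 - y - c, y) ∈ ContigIdx n := mem_contigIdx_of_window fun i j => by
    have := window (ha i) (hc j.rev)
    rw [Fin.val_rev] at this
    omega
  have solid_eq : contigIdxMinor M ⟨_, mem⟩ =
      (X.submatrix (fun i : Fin y => a + i) fun j : Fin y => c + j).det := by
    unfold contigIdxMinor
    congr 1
    ext i j
    change M _ _ = M _ _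
    congr 2
    ring
  exact solid_eq ▸ .apply (contigIdxMinor M) ⟨_, mem⟩

lemma map_aeval_nat {S A B : Type*} [CommRing A] [CommRing B] (f : A →+* B) (v : S → A)
    (r : MvPolynomial S ℕ) :
    f (MvPolynomial.aeval v r) = MvPolynomial.aeval (fun s => f (v s)) r :=
  MvPolynomial.comp_aeval_apply v f.toNatAlgHom r

theorem noninterlaced_minor_positive_rational_in_contiguous_general (n k : ℕ)
    (a b : Fin k → Fin n) (t : ℕ)
    (hg : StrictMono (fun i : Fin k => ((a i : ℕ) + t) % n))
    (hh : StrictAnti (fun i : Fin k => ((b i : ℕ) + t) % n))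
    (hgh : ∀ i j : Fin k, ((a i : ℕ) + t) % n < ((b j : ℕ) + t) % n) :
    ∃ p q : MvPolynomial (ContigIdx n) ℕ, p ≠ 0 ∧ q ≠ 0 ∧
      ∀ {R : Type*} [CommRing R] (M : Matrix (ZMod n) (ZMod n) R),
        (of fun i j : Fin k => M ((a i : ℕ) : ZMod n) ((b j : ℕ) : ZMod n)).det *
            MvPolynomial.aeval (contigIdxMinor M) q =
          MvPolynomial.aeval (contigIdxMinor M) p := by
  obtain ⟨p, q, hp, hq, h⟩ := isPositiveRational_det_of_window (mvPolynomialX (ZMod n) (ZMod n) ℤ)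
    (α := fun i => ((a i + t) % n : ℕ) - t) (β := fun j => ((b j + t) % n : ℕ) - t)
    (fun i j hij => sub_lt_sub_right (Int.ofNat_lt.2 (hg hij)) _)
    (fun i j hij => sub_lt_sub_right (Int.ofNat_lt.2 (hh hij)) _)
    (fun i j => sub_lt_sub_right (Int.ofNat_lt.2 (hgh i j)) _)
    (fun i j => by have := Nat.mod_lt (b j + t) (b j).pos; omega)
  refine ⟨p, q, hp, hq, fun {R} _ M => ?_⟩
  let f : MvPolynomial (ZMod n × ZMod n) ℤ →+* R :=
    MvPolynomial.eval₂Hom (Int.castRingHom R) fun ij => M ij.1 ij.2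
  have map_generic : (mvPolynomialX (ZMod n) (ZMod n) ℤ).map f = M := mvPolynomialX_map_eval₂ _ M
  have h_map := congrArg f h
  simp only [map_mul, map_aeval_nat, map_contigIdxMinor, map_generic, RingHom.map_det] at h_map
  rw [← h_map]
  congr 2
  ext i j
  simp [f]

/-- Any noninterlaced minor is a positive rational function of the noninterlaced
contiguous minors.  The noninterlaced pair `A = {a₁,…,a_k}`, `B = {b₁,…,b_k}` is encoded
by the hypothesis that after a cyclic rotation by `t`, the sequence `a₁, …, a_k, b_k, …, b₁`
is strictly increasing (i.e. it occurs in circular order).  Then there are polynomials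
`p, q` in variables indexed by `T`, both with nonnegative coefficients and `q ≠ 0`, with
`det((M_{aᵢ,bⱼ})) · q((CM_t(M))_t) = p((CM_t(M))_t)` for every `n × n` real matrix `M`. -/
theorem noninterlaced_minor_positive_rational_in_contiguous (n k : ℕ) [NeZero n]
    (a b : Fin k → Fin n) (t : ℕ)
    (hg : StrictMono (fun i : Fin k => ((a i : ℕ) + t) % n))
    (hh : StrictAnti (fun i : Fin k => ((b i : ℕ) + t) % n))
    (hgh : ∀ i j : Fin k, ((a i : ℕ) + t) % n < ((b j : ℕ) + t) % n) :
    ∃ p q : MvPolynomial (ContigIdx n) ℝ,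
      (∀ m : (ContigIdx n) →₀ ℕ, 0 ≤ MvPolynomial.coeff m p) ∧
      (∀ m : (ContigIdx n) →₀ ℕ, 0 ≤ MvPolynomial.coeff m q) ∧
      q ≠ 0 ∧
      ∀ M : Matrix (ZMod n) (ZMod n) ℝ,
        Matrix.det (Matrix.of fun i j : Fin k =>
            M (((a i : ℕ) : ZMod n)) (((b j : ℕ) : ZMod n))) *
          MvPolynomial.eval
            (fun s : ContigIdx n => contiguousMinor n M s.1.1 s.1.2.1 s.1.2.2) q =
          MvPolynomial.eval
            (fun s : ContigIdx n => contiguousMinor n M s.1.1 s.1.2.1 s.1.2.2) p := by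
  obtain ⟨p, q, -, hq, h⟩ :=
    noninterlaced_minor_positive_rational_in_contiguous_general n k a b t hg hh hgh
  refine ⟨p.map (Nat.castRingHom ℝ), q.map (Nat.castRingHom ℝ), fun m => ?_, fun m => ?_, ?_,
    fun M => ?_⟩
  · simp [MvPolynomial.coeff_map]
  · simp [MvPolynomial.coeff_map]
  · simpa using (MvPolynomial.map_injective _ (RingHom.injective_nat _)).ne hq
  · rw [MvPolynomial.eval_map, MvPolynomial.eval_map]
    exact h M
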